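/- Let F_s be a positional scoring rule with score vector s satisfying s_1 = s_2. Then for every integer k ≥ 0, F_s is not k-augmentation strategyproof; consequently the manipulation potential of F_s is ∞. -/

import Mathlib

open Finset

/-- A strict linear preference order over `m` candidates, encoded as the permutation sending
each candidate to its rank; rank `0` is the most preferred position, so
`c ≻ c'` iff `p c < p c'`. -/
abbrev Pref (m : ℕ) := Equiv.Perm (Fin m)

/-- A profile of `N` voters, each with a strict preference over `m` candidates. -/
abbrev Profile (m N : ℕ) := Fin N → Pref m

/-- A social choice correspondence: for each number `N` of voters, it maps each `N`-voter
profile to a set of (tied) winners. -/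
abbrev SCC (m : ℕ) := (N : ℕ) → Profile m N → Finset (Fin m)

/-- The profile `P` with `k` extra copies of voter `i`'s preference appended. -/
def addCopies {m n : ℕ} (P : Profile m n) (i : Fin n) (k : ℕ) : Profile m (n + k) :=
  fun j => if h : (j : ℕ) < n then P ⟨j, h⟩ else P i

/-- Break a tie among the candidates in `A` using the linear tie-breaking order `τ`:
the winner is the `τ`-maximal (lowest `τ`-rank) element of `A`. -/
noncomputable def tiebreak {m : ℕ} [NeZero m] (τ : Pref m) (A : Finset (Fin m)) : Fin m :=
  if h : A.Nonempty then τ.symm ((A.image (fun c => τ c)).min' (h.image _)) else 0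

/-- `F` is `k`-augmentation strategyproof on `n`-voter profiles: for every tie-breaker `τ`,
profile `P`, voter `i`, and alternative preference `q`, voter `i` weakly prefers the outcome
obtained by adding `k` truthful copies of her vote to the outcome of the manipulation `q`. -/
def kASP (m n : ℕ) [NeZero m] (F : SCC m) (k : ℕ) : Prop :=
  ∀ (τ : Pref m) (P : Profile m n) (i : Fin n) (q : Pref m),
    (P i) (tiebreak τ (F (n + k) (addCopies P i k))) ≤
      (P i) (tiebreak τ (F n (Function.update P i q)))

/-- The manipulation potential of `F` on `n`-voter profiles: the least `k` such that `F` is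
`k'`-augmentation strategyproof for all `k' ≥ k`, and `⊤` (i.e. `∞`) if no such `k` exists. -/
noncomputable def manipPot (m n : ℕ) [NeZero m] (F : SCC m) : ℕ∞ :=
  sInf ((fun k : ℕ => (k : ℕ∞)) '' {k : ℕ | ∀ k' : ℕ, k ≤ k' → kASP m n F k'})

/-- Total score of candidate `c` under the (1-indexed) scoring vector `s`:
a voter ranking `c` in position `ℓ ∈ {1, …, m}` contributes `s ℓ` points. -/
noncomputable def posScore {m N : ℕ} (s : ℕ → ℝ) (P : Profile m N) (c : Fin m) : ℝ :=
  ∑ i : Fin N, s ((P i c : ℕ) + 1)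

/-- The positional scoring rule with scoring vector `s`: candidates with maximal score win. -/
noncomputable def posRule (m : ℕ) (s : ℕ → ℝ) : SCC m := fun _ P =>
  Finset.univ.filter (fun c => ∀ c', posScore s P c' ≤ posScore s P c)

/-!
Let the highest score be given at two positions `p < q` and withheld at a position `r`. If all
voters agree, the candidates `c_p` and `c_q` they rank at `p` and `q` both win, and they still do
after any number of truthful copies is added, so a tie-breaker that puts `c_q` first elects `c_q`.
One voter moving `c_q` to position `r` removes it from the winners and leaves `c_p` among them, and
a tie-breaker that otherwise follows the common preference then elects a candidate all voters prefer
to `c_q`.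
-/

section Tiebreak

variable {m : ℕ} [NeZero m] {A : Finset (Fin m)} {p q : Fin m}

theorem tiebreak_mem (τ : Pref m) (hA : A.Nonempty) : tiebreak τ A ∈ A := by
  obtain ⟨c, _, hc⟩ := mem_image.1 ((A.image fun c => τ c).min'_mem (hA.image _))
  rwa [tiebreak, dif_pos hA, ← hc, Equiv.symm_apply_apply]

theorem apply_tiebreak_le (τ : Pref m) (hp : p ∈ A) : τ (tiebreak τ A) ≤ τ p := by
  rw [tiebreak, dif_pos ⟨p, hp⟩, Equiv.apply_symm_apply]
  exact min'_le _ _ (mem_image_of_mem _ hp)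

-- As a tie-breaker, `q.cycleRange` puts `q` first and keeps the order of all other candidates.
theorem tiebreak_cycleRange_of_mem (hq : q ∈ A) : tiebreak q.cycleRange A = q := by
  have hle := apply_tiebreak_le q.cycleRange hq
  rw [Fin.cycleRange_self, nonpos_iff_eq_zero] at hle
  exact q.cycleRange.injective (hle.trans q.cycleRange_self.symm)

theorem tiebreak_cycleRange_lt (hp : p ∈ A) (hq : q ∉ A) (hpq : p < q) :
    tiebreak q.cycleRange A < q := by
  have hne : tiebreak q.cycleRange A ≠ q :=
    ne_of_mem_of_not_mem (tiebreak_mem _ ⟨p, hp⟩) hq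
  refine lt_of_le_of_ne (not_lt.1 fun hgt => ?_) hne
  have hle := apply_tiebreak_le q.cycleRange hp
  rw [Fin.cycleRange_of_gt hgt, Fin.le_def, Fin.coe_cycleRange_of_lt hpq] at hle
  omega

end Tiebreak

section PosRule

variable {m N : ℕ} {s : ℕ → ℝ} {M : ℝ} {P : Profile m N} {a c : Fin m}

theorem score_le_score_one (hmono : ∀ j : ℕ, 1 ≤ j → j < m → s (j + 1) ≤ s j) (j : Fin m) :
    s ((j : ℕ) + 1) ≤ s 1 := by
  have hanti : AntitoneOn s (Set.Icc 1 m) :=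
    antitoneOn_of_succ_le Set.ordConnected_Icc fun i _ hi hi' => hmono i hi.1 hi'.2
  have hle : 1 ≤ (j : ℕ) + 1 := Nat.le_add_left 1 j
  exact hanti ⟨le_rfl, j.pos⟩ ⟨hle, j.isLt⟩ hle

theorem mem_posRule : c ∈ posRule m s N P ↔ ∀ c', posScore s P c' ≤ posScore s P c := by
  simp only [posRule, mem_filter, mem_univ, true_and]

theorem posScore_le_mul (hM : ∀ j : Fin m, s ((j : ℕ) + 1) ≤ M) (P : Profile m N) (c : Fin m) :
    posScore s P c ≤ N * M := by
  simpa [posScore] using sum_le_card_nsmul univ _ M fun i _ => hM (P i c)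

theorem posScore_eq_mul_iff (hM : ∀ j : Fin m, s ((j : ℕ) + 1) ≤ M) :
    posScore s P c = N * M ↔ ∀ i, s ((P i c : ℕ) + 1) = M := by
  have hsum : (N : ℝ) * M = ∑ _i : Fin N, M := by simp
  rw [posScore, hsum, sum_eq_sum_iff_of_le fun i _ => hM (P i c)]
  simp only [mem_univ, true_imp_iff]

theorem mem_posRule_iff_forall_eq (hM : ∀ j : Fin m, s ((j : ℕ) + 1) ≤ M)
    (ha : ∀ i, s ((P i a : ℕ) + 1) = M) :
    c ∈ posRule m s N P ↔ ∀ i, s ((P i c : ℕ) + 1) = M := by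
  have ha_score : posScore s P a = N * M := (posScore_eq_mul_iff hM).2 ha
  rw [mem_posRule, ← posScore_eq_mul_iff hM]
  constructor
  · exact fun hc => (posScore_le_mul hM P c).antisymm (ha_score ▸ hc a)
  · exact fun hc c' => hc ▸ posScore_le_mul hM P c'

end PosRule

section ManipulationPotential

variable {m n : ℕ}

theorem addCopies_const (p : Pref m) (i : Fin n) (k : ℕ) :
    addCopies (fun _ => p) i k = fun _ => p := by
  funext j
  exact dite_eq_right_iff.2 fun _ => rfl

variable [NeZero m]

theorem manipPot_eq_top_iff {F : SCC m} :
    manipPot m n F = ⊤ ↔ ∀ k, ∃ k' ≥ k, ¬ kASP m n F k' := by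
  simp [manipPot, sInf_eq_top]

theorem not_kASP_posRule {s : ℕ → ℝ} {M : ℝ} {p q r : Fin m} (hn : 0 < n)
    (hM : ∀ j : Fin m, s ((j : ℕ) + 1) ≤ M) (hpq : p < q) (hp : s ((p : ℕ) + 1) = M)
    (hq : s ((q : ℕ) + 1) = M) (hr : s ((r : ℕ) + 1) < M) (k : ℕ) : ¬ kASP m n (posRule m s) k := by
  intro hASP
  let i : Fin n := ⟨0, hn⟩
  let P : Profile m n := fun _ => 1
  let P' : Profile m n := Function.update P i (Equiv.swap q r)
  have hpr : p ≠ r := by rintro rfl; exact hr.ne hp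
  have hq_truthful : q ∈ posRule m s (n + k) (addCopies P i k) := by
    rw [addCopies_const, mem_posRule_iff_forall_eq hM fun _ => hq]
    exact fun _ => hq
  have hp_top (j : Fin n) : s ((P' j p : ℕ) + 1) = M := by
    obtain rfl | hj := eq_or_ne j i
    · simpa [P', Equiv.swap_apply_of_ne_of_ne hpq.ne hpr] using hp
    · simpa [P', P, hj] using hp
  have hp_manipulated : p ∈ posRule m s n P' :=
    (mem_posRule_iff_forall_eq hM hp_top).2 hp_top
  have hq_manipulated : q ∉ posRule m s n P' := by
    rw [mem_posRule_iff_forall_eq hM hp_top]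
    intro hq_top
    have hqi := hq_top i
    simp only [P', Function.update_self, Equiv.swap_apply_left] at hqi
    exact hr.ne hqi
  have hle : tiebreak q.cycleRange (posRule m s (n + k) (addCopies P i k)) ≤
      tiebreak q.cycleRange (posRule m s n P') := hASP q.cycleRange P i (Equiv.swap q r)
  rw [tiebreak_cycleRange_of_mem hq_truthful] at hle
  exact hle.not_gt (tiebreak_cycleRange_lt hp_manipulated hq_manipulated hpq)

end ManipulationPotential

theorem posRule_manipPot_infinite_general {m n : ℕ} [NeZero m] {s : ℕ → ℝ} {M : ℝ}
    {p q r : Fin m} (hn : 0 < n) (hM : ∀ j : Fin m, s ((j : ℕ) + 1) ≤ M) (hpq : p < q)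
    (hp : s ((p : ℕ) + 1) = M) (hq : s ((q : ℕ) + 1) = M) (hr : s ((r : ℕ) + 1) < M) :
    (∀ k : ℕ, ¬ kASP m n (posRule m s) k) ∧ manipPot m n (posRule m s) = ⊤ := by
  have hk := not_kASP_posRule hn hM hpq hp hq hr
  exact ⟨hk, manipPot_eq_top_iff.2 fun k => ⟨k, le_rfl, hk k⟩⟩

/-- If a positional scoring rule assigns equal scores to the top two
positions (`s 1 = s 2`), then it is not `k`-augmentation strategyproof for any `k ≥ 0`, and
its manipulation potential is `∞`. -/
theorem posRule_manipPot_infinite (m n : ℕ) [NeZero m] (hm : 3 ≤ m) (hn : 2 ≤ n)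
    (s : ℕ → ℝ) (hs1 : s 1 = 1) (hsm : s m = 0)
    (hmono : ∀ j : ℕ, 1 ≤ j → j < m → s (j + 1) ≤ s j)
    (hs12 : s 1 = s 2) :
    (∀ k : ℕ, ¬ kASP m n (posRule m s) k) ∧ manipPot m n (posRule m s) = ⊤ := by
  have hlast : s (m - 1 + 1) < s 1 := by simp [Nat.sub_add_cancel (by omega : 1 ≤ m), hs1, hsm]
  exact posRule_manipPot_infinite_general (p := ⟨0, by omega⟩) (q := ⟨1, by omega⟩)
    (r := ⟨m - 1, by omega⟩) (by omega) (score_le_score_one hmono) Nat.zero_lt_one rfl hs12.symm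
    hlast
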